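/- arXiv:1904.11868 — 3 statements merged into one kernel-verified Lean document; each statement's English description precedes it below -/
import Mathlib

section
/- Let F be a finite field and let n ≥ 2 be an integer. The unitary Cayley graph Cay(M_n(F), GL_n(F)) is a strongly regular graph (i.e., there exist parameters k, λ, μ such that it is strongly regular with parameters (q^(n^2), k, λ, μ)) if and only if n = 2. -/
/-- The unitary Cayley graph `Cay(M_n(F), GL_n(F))`: vertices are the `n × n`
matrices over `F`, and two matrices `A`, `B` are adjacent iff `A - B` is invertible. -/
def unitaryCayley (F : Type*) [Field F] (n : ℕ) :
    SimpleGraph (Matrix (Fin n) (Fin n) F) where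
  Adj A B := A ≠ B ∧ IsUnit (A - B)
  symm := ⟨fun A B h => ⟨h.1.symm, by rw [← neg_sub]; exact h.2.neg⟩⟩
  loopless := ⟨fun A h => h.1 rfl⟩

/-!
The maps `X ↦ P * X * Q + C` with `P` and `Q` invertible are automorphisms of the graph, so the
number of common neighbours of `A` and `B` depends only on the rank of `A - B`. For `2 × 2` matrices
the ranks `2`, `1`, `0` mean adjacent, distinct and non-adjacent, equal: the graph is strongly
regular.

For `n ≥ 3` the ranks `1` and `2` both occur between distinct non-adjacent vertices, and they have
different counts. Inversion identifies the common neighbours of `D` and `0` with the invertible `Y`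
such that `1 - Y * D` is invertible. If `D` projects onto the coordinate `a`, this excludes the set
`S : Y a a = 1`; if `D` projects onto the coordinates `a` and `b`, it excludes the set
`T : (1 - Y a a) * (1 - Y b b) = Y a b * Y b a`. Subtracting `Y b a` times column `b` from
column `a` embeds the part of `S` outside `B : Y a b = 0 ∧ Y b b = 1` into the part of `T`
outside `B`, while `B` lies in `T` but not in `S`. Hence `S` is smaller than `T`.
-/

open Matrix SimpleGraph

section RankEquivalence

variable {m n R F : Type*} [Fintype n] [CommRing R] [Field F]

theorem eq_zero_of_rank_eq_zero {A : Matrix m n F} (h : A.rank = 0) : A = 0 := by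
  rw [rank, Submodule.finrank_eq_zero, LinearMap.range_eq_bot] at h
  exact mulVec_injective (funext fun v ↦ by simpa using congr($h v))

variable [DecidableEq n]

theorem exists_units_conj_eq_submatrix_perm (σ : Equiv.Perm n) (A : Matrix n n R) :
    ∃ S : GL n R, S.val * A * S⁻¹.val = A.submatrix σ σ := by
  let S : GL n R :=
    ⟨(1 : Matrix n n R).submatrix σ id, (1 : Matrix n n R).submatrix id σ,
      by ext; simp [mul_apply, one_apply], by simp⟩
  refine ⟨S, ?_⟩
  rw [Units.inv_mk]
  ext i j
  simp [S, mul_apply, one_apply]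

theorem exists_units_mul_mul_eq_of_rank_eq {A B : Matrix n n F} (h : A.rank = B.rank) :
    ∃ P Q : GL n F, P.val * A * Q.val = B := by
  obtain ⟨P, Q, e, ⟨P, rfl⟩, ⟨Q, rfl⟩, hA⟩ := exists_rank_normal_form A
  have hB := exists_rank_normal_form B
  rw [← h] at hB
  obtain ⟨P', Q', e', ⟨P', rfl⟩, ⟨Q', rfl⟩, hB⟩ := hB
  obtain ⟨S, hS⟩ := exists_units_conj_eq_submatrix_perm (e'.trans e.symm) (P.val * A * Q.val)
  have he : e ∘ e'.trans e.symm = e' := by ext; simp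
  refine ⟨P'⁻¹ * S * P, Q * S⁻¹ * Q'⁻¹, ?_⟩
  calc (P'⁻¹ * S * P).val * A * (Q * S⁻¹ * Q'⁻¹).val
      = P'⁻¹.val * (S.val * (P.val * A * Q.val) * S⁻¹.val) * Q'⁻¹.val := by
        simp only [Units.val_mul, Matrix.mul_assoc]
    _ = P'⁻¹.val * (P'.val * B * Q'.val) * Q'⁻¹.val := by
        rw [hS, hA, hB, submatrix_submatrix, he]
    _ = B := by rw [Matrix.mul_assoc P'.val, Units.inv_mul_cancel_left, Units.mul_inv_cancel_right]

theorem isUnit_of_rank_eq_card {A : Matrix n n F} (h : A.rank = Fintype.card n) : IsUnit A := by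
  obtain ⟨P, Q, rfl⟩ := exists_units_mul_mul_eq_of_rank_eq ((rank_one (R := F)).trans h.symm)
  simp

theorem rank_eq_one_of_not_isUnit {D : Matrix (Fin 2) (Fin 2) F} (h0 : D ≠ 0) (hD : ¬IsUnit D) :
    D.rank = 1 := by
  have h_ne_zero : D.rank ≠ 0 := mt eq_zero_of_rank_eq_zero h0
  have h_ne_two : D.rank ≠ 2 := mt isUnit_of_rank_eq_card hD
  have h_le_two : D.rank ≤ 2 := D.rank_le_width
  lia

end RankEquivalence

section CoordProj

variable {m n R : Type*} [Fintype m] [DecidableEq n] [CommRing R]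

/-- The sum of the matrix units `E (e i) (e i)`; for injective `e` this is the projection onto the
coordinates in the range of `e`. It is encoded through its factorization over `m → R`, to which the
identity `det (1 - A * B) = det (1 - B * A)` applies. -/
def coordProj (R : Type*) [CommRing R] (e : m → n) : Matrix n n R :=
  (1 : Matrix n n R).submatrix id e * (1 : Matrix n n R).submatrix e id

theorem submatrix_coordProj_of_injective [DecidableEq m] {e : m → n} (he : e.Injective) :
    (coordProj R e).submatrix e e = 1 := by
  ext i j
  simp [coordProj, mul_apply, one_apply, he.eq_iff]

theorem coordProj_ne_zero [Nonempty m] [Nontrivial R] {e : m → n} (he : e.Injective) :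
    coordProj R e ≠ 0 := by
  classical
  intro h
  simpa [h] using submatrix_coordProj_of_injective (R := R) he

variable [Fintype n]

theorem not_isUnit_coordProj [Nontrivial R] (e : m → n) (h : Fintype.card m < Fintype.card n) :
    ¬IsUnit (coordProj R e) := fun hu ↦ h.not_ge <| by
  rw [← rank_of_isUnit _ hu]
  exact (rank_mul_le_left _ _).trans (rank_le_card_width _)

theorem det_one_sub_mul_coordProj [DecidableEq m] (X : Matrix n n R) (e : m → n) :
    (1 - X * coordProj R e).det = (1 - X.submatrix e e).det := by
  rw [coordProj, ← Matrix.mul_assoc, det_one_sub_mul_comm]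
  congr 2
  ext i j
  simp [mul_apply, one_apply]

end CoordProj

section ClearCol

variable {n R : Type*} [Fintype n] [DecidableEq n] [CommRing R] {a b c : n}

/-- The invertible matrix obtained from `Y` by subtracting `Y b a` times column `b` from
column `a`. -/
def clearCol (hba : b ≠ a) (Y : GL n R) : GL n R :=
  Y * SpecialLinearGroup.toGL (SpecialLinearGroup.transvection hba (-Y b a))

theorem coe_clearCol (hba : b ≠ a) (Y : GL n R) :
    (clearCol hba Y : Matrix n n R) = Y * transvection b a (-Y b a) :=
  rfl

theorem clearCol_apply_left (hba : b ≠ a) (Y : GL n R) (i : n) :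
    clearCol hba Y i a = Y i a - Y b a * Y i b := by
  simp [coe_clearCol, sub_eq_add_neg]

theorem clearCol_apply_right (hba : b ≠ a) (Y : GL n R) (i : n) :
    clearCol hba Y i b = Y i b := by
  simp [coe_clearCol, hba]

theorem injOn_clearCol [IsDomain R] (hba : b ≠ a) :
    Set.InjOn (clearCol (R := R) hba) ({Y | Y a a = 1} \ {Y | Y a b = 0 ∧ Y b b = 1}) := by
  rintro Y ⟨hY, hYb⟩ Z ⟨hZ, -⟩ h
  simp only [Set.mem_ofPred_eq] at hY hZ
  have hab : Y a b = Z a b := by simpa only [clearCol_apply_right] using congr($h a b)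
  have hbb : Y b b = Z b b := by simpa only [clearCol_apply_right] using congr($h b b)
  have haa := congr($h a a)
  have hba' := congr($h b a)
  simp only [clearCol_apply_left, hY, hZ, ← hab, ← hbb] at haa hba'
  suffices ht : Y b a = Z b a by simpa [clearCol, ht] using h
  by_contra hne
  rw [← sub_eq_zero] at hne
  refine hYb ⟨mul_left_cancel₀ hne ?_, mul_left_cancel₀ hne ?_⟩
  · linear_combination -haa
  · linear_combination -hba'

theorem ncard_apply_eq_one_lt_ncard_minor_eq_zero [IsDomain R] [Finite R]
    (hba : b ≠ a) (hca : c ≠ a) (hcb : c ≠ b) :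
    {Y : GL n R | Y a a = 1}.ncard <
      {Y : GL n R | (1 - Y a a) * (1 - Y b b) = Y a b * Y b a}.ncard := by
  set S := {Y : GL n R | Y a a = 1}
  set T := {Y : GL n R | (1 - Y a a) * (1 - Y b b) = Y a b * Y b a}
  set B := {Y : GL n R | Y a b = 0 ∧ Y b b = 1}
  have hBT : B ⊆ T := fun Y hY ↦ by simp_all [B, T]
  have h_inside : S ∩ B ⊂ B := by
    refine Set.inter_subset_right.ssubset_of_mem_notMem
      (a := GeneralLinearGroup.swap R a c) ?_ ?_
    · simp [B, Matrix.swap, Equiv.swap_apply_of_ne_of_ne, hba, hcb, hcb.symm]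
    · simp [S, Matrix.swap, hca]
  have h_outside : (S \ B).ncard ≤ (T \ B).ncard := by
    refine Set.ncard_le_ncard_of_injOn (clearCol hba) ?_ (injOn_clearCol hba)
    rintro Y ⟨hY, hYB⟩
    refine ⟨?_, ?_⟩
    · simp only [S, T, Set.mem_ofPred_eq, clearCol_apply_left, clearCol_apply_right] at hY ⊢
      rw [hY]
      ring
    · simpa [B, clearCol_apply_right] using hYB
  calc S.ncard
      = (S ∩ B).ncard + (S \ B).ncard := (Set.ncard_inter_add_ncard_sdiff_eq_ncard S B).symm
    _ < B.ncard + (T \ B).ncard := add_lt_add_of_lt_of_le (Set.ncard_lt_ncard h_inside) h_outside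
    _ = T.ncard := by rw [add_comm, Set.ncard_sdiff_add_ncard_of_subset hBT]

end ClearCol

theorem ncard_commonNeighbors_map_iso {V W : Type*} {G : SimpleGraph V} {H : SimpleGraph W}
    (φ : G ≃g H) (v w : V) :
    (H.commonNeighbors (φ v) (φ w)).ncard = (G.commonNeighbors v w).ncard := by
  have h_image : H.commonNeighbors (φ v) (φ w) = φ '' G.commonNeighbors v w := by
    ext x
    obtain ⟨x, rfl⟩ := φ.surjective x
    simp [mem_commonNeighbors, φ.map_adj_iff]
  rw [h_image, Set.ncard_image_of_injective _ φ.injective]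

namespace unitaryCayley

variable {F : Type*} [Field F] {n : ℕ}

theorem adj_iff_isUnit_sub [NeZero n] {A B : Matrix (Fin n) (Fin n) F} :
    (unitaryCayley F n).Adj A B ↔ IsUnit (A - B) :=
  ⟨And.right, fun h ↦ ⟨sub_ne_zero.1 h.ne_zero, h⟩⟩

/-- The map `X ↦ P * X * Q + C` as an automorphism of the unitary Cayley graph. -/
def affineIso (P Q : GL (Fin n) F) (C : Matrix (Fin n) (Fin n) F) :
    unitaryCayley F n ≃g unitaryCayley F n where
  toEquiv := (P.mulLeft.trans Q.mulRight).trans (Equiv.addRight C)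
  map_rel_iff' := by simp [unitaryCayley, ← mul_sub, ← sub_mul]

theorem exists_iso_of_rank_sub_eq {A B A' B' : Matrix (Fin n) (Fin n) F}
    (h : (A - B).rank = (A' - B').rank) :
    ∃ φ : unitaryCayley F n ≃g unitaryCayley F n, φ A = A' ∧ φ B = B' := by
  obtain ⟨P, Q, hPQ⟩ := exists_units_mul_mul_eq_of_rank_eq h
  refine ⟨affineIso P Q (B' - P * B * Q), ?_, ?_⟩
  · calc P * A * Q + (B' - P * B * Q) = P * (A - B) * Q + B' := by noncomm_ring
      _ = A' := by rw [hPQ, sub_add_cancel]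
  · exact add_sub_cancel _ _

theorem ncard_commonNeighbors_eq_of_rank_sub_eq {A B A' B' : Matrix (Fin n) (Fin n) F}
    (h : (A - B).rank = (A' - B').rank) :
    ((unitaryCayley F n).commonNeighbors A B).ncard =
      ((unitaryCayley F n).commonNeighbors A' B').ncard := by
  obtain ⟨φ, rfl, rfl⟩ := exists_iso_of_rank_sub_eq h
  exact (ncard_commonNeighbors_map_iso φ A B).symm

theorem isSRGWith_two (F : Type*) [Field F] [Fintype F] [DecidableRel (unitaryCayley F 2).Adj] :
    ∃ k l m, (unitaryCayley F 2).IsSRGWith (Fintype.card F ^ 2 ^ 2) k l m := by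
  let N (D : Matrix (Fin 2) (Fin 2) F) := ((unitaryCayley F 2).commonNeighbors D 0).ncard
  have hN {A B D : Matrix (Fin 2) (Fin 2) F} (h : (A - B).rank = D.rank) :
      Fintype.card ((unitaryCayley F 2).commonNeighbors A B) = N D := by
    rw [← Nat.card_eq_fintype_card, Nat.card_coe_set_eq]
    exact ncard_commonNeighbors_eq_of_rank_sub_eq (by rwa [sub_zero])
  have h_inj : Function.Injective ![(0 : Fin 2)] := Function.injective_of_subsingleton _
  have h_rank_one : (coordProj F ![(0 : Fin 2)]).rank = 1 :=
    rank_eq_one_of_not_isUnit (coordProj_ne_zero h_inj) (not_isUnit_coordProj _ (by simp))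
  refine ⟨N 0, N 1, N (coordProj F ![0]), ?_, fun A ↦ ?_, fun A B hAB ↦ hN ?_,
    fun A B hne hAB ↦ hN ?_⟩
  · rw [← Nat.card_eq_fintype_card, ← Nat.card_eq_fintype_card (α := F)]
    simp [Matrix, ← pow_mul]
  · rw [← hN (A := A) (B := A) (by rw [sub_self]), ← card_neighborSet_eq_degree]
    simp only [commonNeighbors_eq, Set.inter_self]
  · rw [rank_one, rank_of_isUnit _ hAB.2]
  · rw [adj_iff_isUnit_sub] at hAB
    rw [rank_eq_one_of_not_isUnit (sub_ne_zero.2 hne) hAB, h_rank_one]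

theorem ncard_commonNeighbors_zero [NeZero n] (D : Matrix (Fin n) (Fin n) F) :
    ((unitaryCayley F n).commonNeighbors D 0).ncard =
      {Y : GL (Fin n) F | IsUnit (1 - Y.val * D)}.ncard := by
  symm
  refine Set.ncard_congr (fun Y _ ↦ ↑Y⁻¹) ?_ ?_ ?_
  · intro Y hY
    have h : D - Y⁻¹.val = -(Y⁻¹.val * (1 - Y.val * D)) := by
      rw [mul_sub, mul_one, Units.inv_mul_cancel_left, neg_sub]
    rw [mem_commonNeighbors, adj_iff_isUnit_sub, adj_iff_isUnit_sub, h, IsUnit.neg_iff,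
      Units.isUnit_units_mul, zero_sub, IsUnit.neg_iff]
    exact ⟨hY, Units.isUnit _⟩
  · exact fun Y Z _ _ h ↦ inv_injective (Units.ext h)
  · rintro X hX
    simp only [mem_commonNeighbors, adj_iff_isUnit_sub, zero_sub, IsUnit.neg_iff] at hX
    obtain ⟨hDX, X, rfl⟩ := hX
    refine ⟨X⁻¹, ?_, by simp⟩
    rw [Set.mem_ofPred_eq]
    have h : 1 - X⁻¹.val * D = -(X⁻¹.val * (D - X.val)) := by
      rw [mul_sub, Units.inv_mul, neg_sub]
    rwa [h, IsUnit.neg_iff, Units.isUnit_units_mul]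

section Finite

variable [Finite F] [NeZero n]

theorem ncard_commonNeighbors_coordProj_add {m : Type*} [Fintype m] [DecidableEq m]
    (e : m → Fin n) :
    ((unitaryCayley F n).commonNeighbors (coordProj F e) 0).ncard +
      {Y : GL (Fin n) F | (1 - Y.val.submatrix e e).det = 0}.ncard = Nat.card (GL (Fin n) F) := by
  have h_compl : {Y : GL (Fin n) F | (1 - Y.val.submatrix e e).det = 0} =
      {Y | IsUnit (1 - Y.val * coordProj F e)}ᶜ := by
    ext Y
    simp [isUnit_iff_isUnit_det, det_one_sub_mul_coordProj]
  rw [ncard_commonNeighbors_zero, h_compl, Set.ncard_add_ncard_compl]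

theorem ncard_commonNeighbors_coordProj_pair_lt {a b c : Fin n}
    (hba : b ≠ a) (hca : c ≠ a) (hcb : c ≠ b) :
    ((unitaryCayley F n).commonNeighbors (coordProj F ![a, b]) 0).ncard <
      ((unitaryCayley F n).commonNeighbors (coordProj F ![a]) 0).ncard := by
  have h_det_single (Y : GL (Fin n) F) :
      (1 - Y.val.submatrix ![a] ![a]).det = 0 ↔ Y a a = 1 := by
    simp [-submatrix_cons_row, sub_eq_zero, eq_comm (a := (1 : F))]
  have h_det_pair (Y : GL (Fin n) F) :
      (1 - Y.val.submatrix ![a, b] ![a, b]).det = 0 ↔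
        (1 - Y a a) * (1 - Y b b) = Y a b * Y b a := by
    simp [-submatrix_cons_row, det_fin_two, sub_eq_zero]
  have h_single := ncard_commonNeighbors_coordProj_add (F := F) ![a]
  have h_pair := ncard_commonNeighbors_coordProj_add (F := F) ![a, b]
  simp only [h_det_single] at h_single
  simp only [h_det_pair] at h_pair
  have h_lt := ncard_apply_eq_one_lt_ncard_minor_eq_zero (R := F) hba hca hcb
  lia

end Finite

theorem not_isSRGWith [Fintype F] [DecidableRel (unitaryCayley F n).Adj] (hn : 3 ≤ n)
    {v k l m : ℕ} : ¬(unitaryCayley F n).IsSRGWith v k l m := by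
  intro h
  have : NeZero n := ⟨by lia⟩
  let a : Fin n := ⟨0, by lia⟩
  let b : Fin n := ⟨1, by lia⟩
  let c : Fin n := ⟨2, by lia⟩
  have h_count {r : ℕ} [NeZero r] {e : Fin r → Fin n} (hr : r < n) (he : e.Injective) :
      ((unitaryCayley F n).commonNeighbors (coordProj F e) 0).ncard = m := by
    have h_not_adj : ¬(unitaryCayley F n).Adj (coordProj F e) 0 := by
      rw [adj_iff_isUnit_sub, sub_zero]
      exact not_isUnit_coordProj e (by simpa using hr)
    rw [← h.of_not_adj (coordProj_ne_zero he) h_not_adj, ← Nat.card_eq_fintype_card,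
      Nat.card_coe_set_eq]
  have h_single := h_count (e := ![a]) (by lia) (Function.injective_of_subsingleton _)
  have h_pair := h_count (e := ![a, b]) (by lia) (by simp [a, b])
  have h_lt := ncard_commonNeighbors_coordProj_pair_lt (F := F) (a := a) (b := b) (c := c)
    (by simp [a, b]) (by simp [a, c]) (by simp [b, c])
  rw [h_single, h_pair] at h_lt
  exact h_lt.false

end unitaryCayley

/-- For a finite field `F` with `q` elements and `n ≥ 2`, the unitary Cayley graph
`Cay(M_n(F), GL_n(F))` is strongly regular (with some parameters `(q ^ n ^ 2, k, l, m)`)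
if and only if `n = 2`. -/
theorem unitaryCayley_isSRG_iff (F : Type*) [Field F] [Fintype F]
    (n : ℕ) (hn : 2 ≤ n) :
    letI : DecidableRel (unitaryCayley F n).Adj := Classical.decRel _
    (∃ k l m : ℕ,
        (unitaryCayley F n).IsSRGWith ((Fintype.card F) ^ (n ^ 2)) k l m) ↔ n = 2 := by
  let : DecidableRel (unitaryCayley F n).Adj := Classical.decRel _
  constructor
  · rintro ⟨k, l, m, h⟩
    by_contra hne
    exact unitaryCayley.not_isSRGWith (by lia) h
  · rintro rfl
    exact unitaryCayley.isSRGWith_two F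
end

section
/- Let F be a finite field, n a positive integer, and let A and B be two non-adjacent vertices of the unitary Cayley graph Cay(M_n(F), GL_n(F)) (i.e., A ≠ B and A − B is not invertible). Then the number of common neighbors of A and B equals the cardinality of the set ((D_r + GL_n(F)) ∩ GL_n(F)), where r = rank(A − B) and D_r denotes the block diagonal n×n matrix with the r×r identity in the upper left corner and zeros elsewhere; here D_r + GL_n(F) denotes the set of matrices D_r + X with X invertible. -/
/-
The common neighbors of `A` and `B` correspond under `C ↦ A - C` to the units `Y` such that
`Y - (A - B)` is again a unit, that is, to `((A - B) + GL_n(F)) ∩ GL_n(F)`. The bijection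
`Y ↦ P * Y * Q` with `P`, `Q` invertible shows that the size of `(M + GL_n(F)) ∩ GL_n(F)` only
depends on `M` up to matrix equivalence, hence only on the rank of `M`.
-/

open Cardinal

section Ring

variable {R : Type*} [Ring R]

/-- The set `(a + Rˣ) ∩ Rˣ` of units of `R` that are the sum of `a` and a unit, regarded as a set
of elements of `R`. -/
def translateInterUnits (a : R) : Set R :=
  (fun x => a + x) '' {x | IsUnit x} ∩ {x | IsUnit x}

theorem mem_translateInterUnits {a x : R} :
    x ∈ translateInterUnits a ↔ IsUnit (x - a) ∧ IsUnit x := by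
  simp [translateInterUnits, Set.image_add_left, neg_add_eq_sub]

theorem units_mul_mul_mem_translateInterUnits (u v : Rˣ) {a x : R} :
    u * x * v ∈ translateInterUnits (u * a * v) ↔ x ∈ translateInterUnits a := by
  simp only [mem_translateInterUnits, ← sub_mul, ← mul_sub, Units.isUnit_mul_units,
    Units.isUnit_units_mul]

theorem mk_translateInterUnits_units_mul_mul (u v : Rˣ) (a : R) :
    #(translateInterUnits (u * a * v)) = #(translateInterUnits a) :=
  (mk_congr <| (u.mulLeft.trans v.mulRight).subtypeEquiv fun _ =>
    (units_mul_mul_mem_translateInterUnits u v).symm).symm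

end Ring

theorem exists_units_mul_mul_eq_submatrix {R m : Type*} [CommRing R] [Fintype m] [DecidableEq m]
    (M : Matrix m m R) (σ τ : Equiv.Perm m) :
    ∃ P Q : (Matrix m m R)ˣ, (P * M * Q : Matrix m m R) = M.submatrix σ τ := by
  have hP : IsUnit ((1 : Matrix m m R).submatrix σ (Equiv.refl m)) :=
    (Matrix.isUnit_submatrix_equiv ..).2 isUnit_one
  have hQ : IsUnit ((1 : Matrix m m R).submatrix (Equiv.refl m) τ) :=
    (Matrix.isUnit_submatrix_equiv ..).2 isUnit_one
  refine ⟨hP.unit, hQ.unit, ?_⟩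
  rw [IsUnit.unit_spec, IsUnit.unit_spec, Matrix.one_submatrix_mul, Matrix.mul_submatrix_one]
  rfl

section Rank

variable {F m : Type*} [Field F] [Fintype m] [DecidableEq m]

theorem exists_units_mul_mul_eq_submatrix_fromBlocks {M : Matrix m m F} {r : ℕ} (h : M.rank = r) :
    ∃ (P Q : (Matrix m m F)ˣ) (e : m ≃ Fin r ⊕ Fin (Fintype.card m - r)),
      (P * M * Q : Matrix m m F) = (Matrix.fromBlocks 1 0 0 0).submatrix e e := by
  subst h
  obtain ⟨P, Q, e, hP, hQ, hPQ⟩ := M.exists_rank_normal_form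
  exact ⟨hP.unit, hQ.unit, e, hPQ⟩

theorem exists_units_mul_mul_eq_of_rank_eq_s3 {M N : Matrix m m F} (h : M.rank = N.rank) :
    ∃ P Q : (Matrix m m F)ˣ, (P * M * Q : Matrix m m F) = N := by
  obtain ⟨P₁, Q₁, e₁, h₁⟩ := exists_units_mul_mul_eq_submatrix_fromBlocks h
  obtain ⟨P₂, Q₂, e₂, h₂⟩ := exists_units_mul_mul_eq_submatrix_fromBlocks (M := N) rfl
  obtain ⟨P, Q, hPQ⟩ := exists_units_mul_mul_eq_submatrix (P₁ * M * Q₁ : Matrix m m F)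
    (e₂.trans e₁.symm) (e₂.trans e₁.symm)
  have hMN : (P * (P₁ * M * Q₁) * Q : Matrix m m F) = P₂ * N * Q₂ := by
    rw [hPQ, h₁, h₂, Matrix.submatrix_submatrix]
    simp [← Function.comp_assoc]
  refine ⟨P₂⁻¹ * P * P₁, Q₁ * Q * Q₂⁻¹, ?_⟩
  calc (↑(P₂⁻¹ * P * P₁) * M * ↑(Q₁ * Q * Q₂⁻¹) : Matrix m m F)
      = ↑P₂⁻¹ * (P * (P₁ * M * Q₁) * Q) * ↑Q₂⁻¹ := by simp only [Units.val_mul, mul_assoc]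
    _ = N := by
      rw [hMN, mul_assoc (P₂ : Matrix m m F), Units.inv_mul_cancel_left,
        Units.mul_inv_cancel_right]

theorem mk_translateInterUnits_eq_of_rank_eq {M N : Matrix m m F} (h : M.rank = N.rank) :
    #(translateInterUnits M) = #(translateInterUnits N) := by
  obtain ⟨P, Q, rfl⟩ := exists_units_mul_mul_eq_of_rank_eq_s3 h
  exact (mk_translateInterUnits_units_mul_mul P Q M).symm

end Rank

/-- The `n × n` matrix `D_r` with the `r × r` identity in the upper left corner and zeros
elsewhere. For `r ≥ n` it is the identity matrix. -/
def cornerIdentity (R : Type*) [Zero R] [One R] (n r : ℕ) : Matrix (Fin n) (Fin n) R :=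
  Matrix.of fun i j => if i = j ∧ (i : ℕ) < r then 1 else 0

theorem cornerIdentity_eq_diagonal (R : Type*) [Zero R] [One R] (n r : ℕ) :
    cornerIdentity R n r = Matrix.diagonal fun i : Fin n => if (i : ℕ) < r then 1 else 0 := by
  ext i j
  simp [cornerIdentity, Matrix.diagonal_apply, ite_and]

theorem rank_cornerIdentity (F : Type*) [Field F] (n r : ℕ) :
    (cornerIdentity F n r).rank = min n r := by
  classical
  rw [cornerIdentity_eq_diagonal, Matrix.rank_diagonal]
  simp [Fintype.card_subtype, Fin.card_filter_val_lt]

section UnitaryCayley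

variable {F : Type*} [Field F] {n : ℕ} [NeZero n]

theorem unitaryCayley_adj {A B : Matrix (Fin n) (Fin n) F} :
    (unitaryCayley F n).Adj A B ↔ IsUnit (A - B) :=
  and_iff_right_of_imp fun h => sub_ne_zero.1 h.ne_zero

theorem mem_commonNeighbors_unitaryCayley {A B C : Matrix (Fin n) (Fin n) F} :
    C ∈ (unitaryCayley F n).commonNeighbors A B ↔ A - C ∈ translateInterUnits (A - B) := by
  rw [SimpleGraph.mem_commonNeighbors, unitaryCayley_adj, unitaryCayley_adj,
    mem_translateInterUnits, sub_sub_sub_cancel_left, and_comm]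

theorem mk_commonNeighbors_unitaryCayley (A B : Matrix (Fin n) (Fin n) F) :
    #((unitaryCayley F n).commonNeighbors A B) = #(translateInterUnits (A - B)) :=
  mk_congr <| (Equiv.subLeft A).subtypeEquiv fun _ => mem_commonNeighbors_unitaryCayley

end UnitaryCayley

theorem card_commonNeighbors_of_not_adj_general (F : Type*) [Field F] (n : ℕ) [NeZero n]
    (A B : Matrix (Fin n) (Fin n) F) :
    #((unitaryCayley F n).commonNeighbors A B) =
      #(translateInterUnits (cornerIdentity F n (A - B).rank)) := by
  have hrank : (A - B).rank = (cornerIdentity F n (A - B).rank).rank := by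
    rw [rank_cornerIdentity, min_eq_right (A - B).rank_le_height]
  rw [mk_commonNeighbors_unitaryCayley, mk_translateInterUnits_eq_of_rank_eq hrank]

/-- If `A` and `B` are non-adjacent vertices of `Cay(M_n(F), GL_n(F))` (i.e. `A ≠ B` and
`A - B` is not invertible), then the number of their common neighbors equals
`|(D_r + GL_n(F)) ∩ GL_n(F)|`, where `r = rank (A - B)` and `D_r` is the block-diagonal
matrix with `I_r` in the upper-left corner and zeros elsewhere. -/
theorem card_commonNeighbors_of_not_adj (F : Type*) [Field F] [Fintype F]
    (n : ℕ) (hn : 0 < n) (A B : Matrix (Fin n) (Fin n) F)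
    (hne : A ≠ B) (hnu : ¬ IsUnit (A - B)) :
    ((unitaryCayley F n).commonNeighbors A B).ncard =
      ((fun X => (Matrix.of fun i j : Fin n =>
            if i = j ∧ (i : ℕ) < (A - B).rank then (1 : F) else 0) + X) ''
          {X : Matrix (Fin n) (Fin n) F | IsUnit X} ∩
        {X : Matrix (Fin n) (Fin n) F | IsUnit X}).ncard := by
  have : NeZero n := .of_pos hn
  exact congrArg Cardinal.toNat (card_commonNeighbors_of_not_adj_general F n A B)
end

section
/- Let F be a finite field with q elements and n ≥ 1 an integer, and let E_11 denote the n×n matrix with 1 in position (1,1) and 0 elsewhere. Then the number of matrices A ∈ M_n(F) such that both A and A − E_11 are invertible equals (q^n − q^(n−1) − 1) · ∏_{k=1}^{n−1} (q^n − q^k). Equivalently, |(E_11 + GL_n(F)) ∩ GL_n(F)| = (q^n − q^(n−1) − 1) · ∏_{k=1}^{n−1} (q^n − q^k). -/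
/-!
For a rank one matrix `u wᵀ`, the matrix determinant lemma
`det (A - u wᵀ) = det A * (1 - w ⬝ A⁻¹ u)` shows that, for invertible `A`, the matrix `A - u wᵀ` is
invertible iff `w ⬝ A⁻¹ u ≠ 1`. Substituting `g = A⁻¹`, one counts the `g ∈ GL` for which the
nonzero vector `g u` avoids the affine hyperplane `w ⬝ v = 1`. As `GL` is transitive on the
`q ^ n - 1` nonzero vectors, `g u` takes each of the `q ^ n - q ^ (n - 1) - 1` admissible values for
the same number `|GL| / (q ^ n - 1)` of `g`.
-/

open Matrix Module MulAction

theorem ncard_smul_mem_mul_ncard_orbit {G X : Type*} [Group G] [MulAction G X] (x : X) {T : Set X}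
    (hT : T ⊆ orbit G x) :
    {g : G | g • x ∈ T}.ncard * (orbit G x).ncard = T.ncard * Nat.card G := by
  have card_cosets : Nat.card (ofQuotientStabilizer G x ⁻¹' T) = T.ncard :=
    Nat.card_preimage_of_injective (injective_ofQuotientStabilizer G x) fun y hy ↦ by
      obtain ⟨g, rfl⟩ := hT hy
      exact ⟨g, ofQuotientStabilizer_mk G x g⟩
  calc {g : G | g • x ∈ T}.ncard * (orbit G x).ncard
      = Nat.card (stabilizer G x) * T.ncard * (stabilizer G x).index := by
        rw [index_stabilizer, ← card_cosets, ← QuotientGroup.card_preimage_mk]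
        rfl
    _ = T.ncard * Nat.card G := by rw [← (stabilizer G x).card_mul_index]; ring

section Hyperplane

variable {F V : Type*} [Field F] [AddCommGroup V] [Module F V] [FiniteDimensional F V]
  {f : Dual F V}

theorem ncard_dual_apply_eq (hf : f ≠ 0) (c : F) :
    {v | f v = c}.ncard = Nat.card F ^ (finrank F V - 1) := by
  have e := f.toAddMonoidHom.fiberEquivKerOfSurjective (LinearMap.surjective hf) c
  calc {v | f v = c}.ncard = Nat.card (LinearMap.ker f) := Nat.card_congr e
    _ = Nat.card F ^ (finrank F V - 1) := by
      rw [Module.natCard_eq_pow_finrank (K := F), ← Dual.finrank_ker_add_one_of_ne_zero hf,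
        Nat.add_sub_cancel]

theorem ncard_ne_zero_and_dual_apply_ne [Finite F] (hf : f ≠ 0) {c : F} (hc : c ≠ 0) :
    ({v | v ≠ 0 ∧ f v ≠ c}.ncard : ℤ) =
      (Nat.card F : ℤ) ^ finrank F V - (Nat.card F : ℤ) ^ (finrank F V - 1) - 1 := by
  have : Finite V := Module.finite_of_finite F
  have compl_eq : {v | v ≠ 0 ∧ f v ≠ c}ᶜ = insert 0 {v | f v = c} := by
    ext v
    simp only [Set.mem_compl_iff, Set.mem_ofPred_eq, Set.mem_insert_iff]
    tauto
  have zero_notMem : (0 : V) ∉ {v | f v = c} := by simpa using hc.symm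
  have card_add := Set.ncard_add_ncard_compl {v | v ≠ 0 ∧ f v ≠ c}
  rw [compl_eq, Set.ncard_insert_of_notMem zero_notMem, ncard_dual_apply_eq hf,
    Module.natCard_eq_pow_finrank (K := F) (V := V)] at card_add
  push_cast [← @Nat.cast_inj ℤ] at card_add
  linear_combination card_add

end Hyperplane

theorem exists_linearEquiv_apply_eq {K V : Type*} [DivisionRing K] [AddCommGroup V] [Module K V]
    {x y : V} (hx : x ≠ 0) (hy : y ≠ 0) : ∃ e : V ≃ₗ[K] V, e x = y := by
  let e := (LinearEquiv.toSpanNonzeroSingleton K V x hx).symm ≪≫ₗ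
    LinearEquiv.toSpanNonzeroSingleton K V y hy
  obtain ⟨g, hg⟩ := Submodule.exists_linearEquiv_restrict_eq e
  have symm_self : (LinearEquiv.toSpanNonzeroSingleton K V x hx).symm
      ⟨x, Submodule.mem_span_singleton_self x⟩ = 1 :=
    LinearEquiv.coord_self K V x hx
  exact ⟨g, by simpa [e, symm_self] using (hg ⟨x, Submodule.mem_span_singleton_self x⟩).symm⟩

section Matrix

variable {ι : Type*} [Fintype ι] [DecidableEq ι]

theorem det_sub_vecMulVec {R : Type*} [CommRing R] {A : Matrix ι ι R} (hA : IsUnit A.det)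
    (u w : ι → R) : (A - vecMulVec u w).det = A.det * (1 - w ⬝ᵥ A⁻¹ *ᵥ u) := by
  rw [sub_eq_add_neg, ← neg_vecMulVec, vecMulVec_eq Unit,
    det_add_replicateCol_mul_replicateRow hA, det_unique (n := Unit), Matrix.mul_assoc,
    ← replicateCol_mulVec, Matrix.add_apply, one_apply_eq, replicateRow_mul_replicateCol_apply,
    mulVec_neg, dotProduct_neg, ← sub_eq_add_neg]

theorem setOf_isUnit_and_isUnit_sub_vecMulVec {R : Type*} [CommRing R] (u w : ι → R) :
    {A : Matrix ι ι R | IsUnit A ∧ IsUnit (A - vecMulVec u w)} =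
      (fun g : GL ι R ↦ (↑g⁻¹ : Matrix ι ι R)) '' {g | IsUnit (1 - w ⬝ᵥ g • u)} := by
  have isUnit_sub_iff (g : GL ι R) :
      IsUnit ((↑g⁻¹ : Matrix ι ι R) - vecMulVec u w) ↔ IsUnit (1 - w ⬝ᵥ g • u) := by
    have isUnit_det : IsUnit (↑g⁻¹ : Matrix ι ι R).det := (isUnit_iff_isUnit_det _).1 g⁻¹.isUnit
    rw [isUnit_iff_isUnit_det, det_sub_vecMulVec isUnit_det, ← coe_units_inv, inv_inv,
      IsUnit.mul_iff, and_iff_right isUnit_det]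
    rfl
  ext A
  constructor
  · rintro ⟨⟨g, rfl⟩, hg⟩
    exact ⟨g⁻¹, (isUnit_sub_iff g⁻¹).1 (by rwa [inv_inv]), by simp only [inv_inv]⟩
  · rintro ⟨g, hg, rfl⟩
    exact ⟨g⁻¹.isUnit, (isUnit_sub_iff g).2 hg⟩

variable {F : Type*} [Field F]

theorem orbit_GL_eq_compl_zero {u : ι → F} (hu : u ≠ 0) : orbit (GL ι F) u = {0}ᶜ := by
  ext v
  refine ⟨?_, fun hv ↦ ?_⟩
  · rintro ⟨g, rfl⟩
    exact (smul_ne_zero_iff_ne g).2 hu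
  · obtain ⟨e, rfl⟩ := exists_linearEquiv_apply_eq (K := F) hu hv
    exact ⟨GeneralLinearGroup.toLin.symm (.ofLinearEquiv e), LinearMap.toMatrix'_mulVec _ _⟩

variable [Fintype F]

theorem card_GL_eq_mul_prod [Nonempty ι] :
    Nat.card (GL ι F) = (Fintype.card F ^ Fintype.card ι - 1) *
      ∏ k ∈ Finset.Icc 1 (Fintype.card ι - 1),
        (Fintype.card F ^ Fintype.card ι - Fintype.card F ^ k) := by
  let e : GL ι F ≃* GL (Fin (Fintype.card ι)) F :=
    Units.mapEquiv (reindexAlgEquiv F F (Fintype.equivFin ι)).toMulEquiv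
  rw [Nat.card_congr e.toEquiv, card_GL_field,
    ← Finset.prod_range fun k ↦ Fintype.card F ^ Fintype.card ι - Fintype.card F ^ k,
    Finset.prod_range_eq_mul_Ico _ Fintype.card_pos, pow_zero,
    ← Finset.Icc_sub_one_right_eq_Ico_of_not_isMin (by simp)]

theorem ncard_GL_smul_mem {u : ι → F} (hu : u ≠ 0) {T : Set (ι → F)} (hT : 0 ∉ T) :
    {g : GL ι F | g • u ∈ T}.ncard = T.ncard * ∏ k ∈ Finset.Icc 1 (Fintype.card ι - 1),
      (Fintype.card F ^ Fintype.card ι - Fintype.card F ^ k) := by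
  have : Nonempty ι := (Function.ne_iff.1 hu).nonempty
  have card_orbit : (orbit (GL ι F) u).ncard = Fintype.card F ^ Fintype.card ι - 1 := by
    rw [orbit_GL_eq_compl_zero hu, Set.ncard_compl, Set.ncard_singleton, Nat.card_fun,
      Nat.card_eq_fintype_card, Nat.card_eq_fintype_card]
  have card_orbit_pos : 0 < Fintype.card F ^ Fintype.card ι - 1 :=
    Nat.sub_pos_of_lt (Nat.one_lt_pow Fintype.card_ne_zero Fintype.one_lt_card)
  refine Nat.eq_of_mul_eq_mul_right card_orbit_pos ?_
  have hT_orbit : T ⊆ orbit (GL ι F) u := by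
    rwa [orbit_GL_eq_compl_zero hu, Set.subset_compl_singleton_iff]
  rw [← card_orbit, ncard_smul_mem_mul_ncard_orbit u hT_orbit, card_GL_eq_mul_prod, card_orbit]
  ring

theorem card_unit_and_unit_sub_stdBasisMatrix_general {u w : ι → F} (hu : u ≠ 0) (hw : w ≠ 0) :
    ({A : Matrix ι ι F | IsUnit A ∧ IsUnit (A - vecMulVec u w)}.ncard : ℤ) =
      ((Fintype.card F : ℤ) ^ Fintype.card ι - (Fintype.card F : ℤ) ^ (Fintype.card ι - 1) - 1) *
        ∏ k ∈ Finset.Icc 1 (Fintype.card ι - 1),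
          ((Fintype.card F : ℤ) ^ Fintype.card ι - (Fintype.card F : ℤ) ^ k) := by
  have setOf_isUnit_eq : {g : GL ι F | IsUnit (1 - w ⬝ᵥ g • u)} =
      {g | g • u ∈ {v | v ≠ 0 ∧ dotProductEquiv F ι w v ≠ 1}} := by
    ext g
    have hgu : g • u ≠ 0 := (smul_ne_zero_iff_ne g).2 hu
    simp [hgu, sub_eq_zero, eq_comm (a := (1 : F))]
  have val_inv_injective : Function.Injective fun g : GL ι F ↦ (↑g⁻¹ : Matrix ι ι F) :=
    Units.val_injective.comp inv_injective
  have hf : dotProductEquiv F ι w ≠ 0 := by simpa using hw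
  rw [setOf_isUnit_and_isUnit_sub_vecMulVec,
    Set.ncard_image_of_injective _ val_inv_injective, setOf_isUnit_eq,
    ncard_GL_smul_mem hu (by simp), Nat.cast_mul, ncard_ne_zero_and_dual_apply_ne hf one_ne_zero,
    finrank_fintype_fun_eq_card, Nat.card_eq_fintype_card, Nat.cast_prod]
  congr 1
  refine Finset.prod_congr rfl fun k hk ↦ ?_
  rw [Nat.cast_sub (Nat.pow_le_pow_right Fintype.card_pos (by grind))]
  push_cast
  rfl

end Matrix

/-- For a finite field `F` with `q` elements and `n ≥ 1`, the number of matrices `A`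
such that both `A` and `A - E₁₁` are invertible (equivalently,
`|(E₁₁ + GL_n(F)) ∩ GL_n(F)|`) equals `(q^n - q^(n-1) - 1) · ∏_{k=1}^{n-1} (q^n - q^k)`. -/
theorem card_unit_and_unit_sub_stdBasisMatrix (F : Type*) [Field F] [Fintype F]
    (n : ℕ) (hn : 0 < n) :
    (({A : Matrix (Fin n) (Fin n) F |
        IsUnit A ∧ IsUnit (A - Matrix.single ⟨0, hn⟩ ⟨0, hn⟩ (1 : F))}.ncard : ℤ)) =
      ((Fintype.card F : ℤ) ^ n - (Fintype.card F : ℤ) ^ (n - 1) - 1) *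
        ∏ k ∈ Finset.Icc 1 (n - 1), ((Fintype.card F : ℤ) ^ n - (Fintype.card F : ℤ) ^ k) := by
  simpa only [single_eq_single_vecMulVec_single, Fintype.card_fin] using
    card_unit_and_unit_sub_stdBasisMatrix_general (F := F) (u := Pi.single (⟨0, hn⟩ : Fin n) 1)
      (w := Pi.single ⟨0, hn⟩ 1) (by simp) (by simp)
end
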